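/- Fix δ₀, ρ₀ ∈ (0,1), set α₀ = (1−ρ₀)(1−δ₀)²/ρ₀ and β₀ = (1−ρ₀)(1−δ₀)/ρ₀, and for n ≥ 3 define t_n = δ₀√(2(1−ρ₀)log n), c_n = √(2(1−ρ₀)log(n)/ρ₀) · (1 − δ₀ − (1/4)·log log n / log n), and ψ_n(s) = φ(s) · Φ((t_n − √ρ₀ s)/√(1−ρ₀))^n. Then there is a constant c > 0 depending only on (δ₀, ρ₀) such that for all sufficiently large n, ∫_{−∞}^{−c_n} ψ_n(s) ds ≥ c · n^{−α₀} · (log n)^{(β₀−1)/2}. -/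

import Mathlib

open MeasureTheory Real Filter

/-- The standard normal density `φ`. -/
noncomputable def stdNormalPDF (s : ℝ) : ℝ :=
  (Real.sqrt (2 * Real.pi))⁻¹ * Real.exp (-s ^ 2 / 2)

/-- The standard normal distribution function `Φ`. -/
noncomputable def stdNormalCDF (x : ℝ) : ℝ :=
  ∫ s in Set.Iic x, stdNormalPDF s

/-- `t_n = δ₀ √(2(1−ρ₀) log n)`. -/
noncomputable def tN (δ₀ ρ₀ : ℝ) (n : ℕ) : ℝ :=
  δ₀ * Real.sqrt (2 * (1 - ρ₀) * Real.log n)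

/-- `c_n = √(2(1−ρ₀)log(n)/ρ₀) · (1 − δ₀ − (1/4)·log log n / log n)`. -/
noncomputable def cN (δ₀ ρ₀ : ℝ) (n : ℕ) : ℝ :=
  Real.sqrt (2 * (1 - ρ₀) * Real.log n / ρ₀) *
    (1 - δ₀ - (1 / 4) * Real.log (Real.log n) / Real.log n)

/-- `ψ_n(s) = φ(s) · Φ((t_n − √ρ₀ s)/√(1−ρ₀))^n`. -/
noncomputable def psiN (δ₀ ρ₀ : ℝ) (n : ℕ) (s : ℝ) : ℝ :=
  stdNormalPDF s *
    stdNormalCDF ((tN δ₀ ρ₀ n - Real.sqrt ρ₀ * s) / Real.sqrt (1 - ρ₀)) ^ n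


lemma aux_pdf_eq (s : ℝ) : stdNormalPDF s = ProbabilityTheory.gaussianPDFReal 0 1 s := by
  simp [stdNormalPDF, ProbabilityTheory.gaussianPDFReal]

lemma aux_pdf_fun : stdNormalPDF = ProbabilityTheory.gaussianPDFReal 0 1 := funext aux_pdf_eq

lemma aux_pdf_int : Integrable stdNormalPDF := by
  rw [aux_pdf_fun]; exact ProbabilityTheory.integrable_gaussianPDFReal 0 1

lemma aux_pdf_one : ∫ s, stdNormalPDF s = 1 := by
  rw [aux_pdf_fun]; exact ProbabilityTheory.integral_gaussianPDFReal_eq_one 0 one_ne_zero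

lemma aux_pdf_nonneg (s : ℝ) : 0 ≤ stdNormalPDF s := by
  unfold stdNormalPDF; positivity

lemma aux_cdf_nonneg (x : ℝ) : 0 ≤ stdNormalCDF x :=
  integral_nonneg aux_pdf_nonneg

lemma aux_cdf_mono : Monotone stdNormalCDF := by
  intro x y h
  exact setIntegral_mono_set aux_pdf_int.integrableOn
    (Eventually.of_forall aux_pdf_nonneg) (Set.Iic_subset_Iic.2 h).eventuallyLE

lemma aux_cdf_add (x : ℝ) : stdNormalCDF x + ∫ s in Set.Ioi x, stdNormalPDF s = 1 := by
  rw [← aux_pdf_one, ← integral_add_compl (measurableSet_Iic (a := x)) aux_pdf_int, Set.compl_Iic]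
  rfl

lemma aux_cdf_le_one (x : ℝ) : stdNormalCDF x ≤ 1 := by
  have h := aux_cdf_add x
  have : 0 ≤ ∫ s in Set.Ioi x, stdNormalPDF s := integral_nonneg aux_pdf_nonneg
  linarith

lemma aux_sqrt : 2 ≤ √(2 * π) := by
  apply Real.le_sqrt_of_sq_le
  nlinarith [Real.pi_gt_three]

lemma aux_tail (u : ℝ) (hu : 0 < u) : 1 - rexp (-u ^ 2 / 2) / (2 * u) ≤ stdNormalCDF u := by
  have h := aux_cdf_add u
  have key : ∫ s in Set.Ioi u, stdNormalPDF s ≤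
      ∫ s in Set.Ioi u, (2⁻¹ * rexp (u ^ 2 / 2)) * rexp (-u * s) := by
    apply setIntegral_mono_on aux_pdf_int.integrableOn _ measurableSet_Ioi
    · intro s _
      unfold stdNormalPDF
      rw [mul_assoc, ← Real.exp_add]
      apply mul_le_mul _ _ (by positivity) (by positivity)
      · exact inv_anti₀ (by norm_num) aux_sqrt
      · apply Real.exp_le_exp.2
        nlinarith [sq_nonneg (s - u)]
    · exact (integrableOn_exp_mul_Ioi (by linarith) u).const_mul _
  rw [integral_const_mul, integral_exp_mul_Ioi (by linarith)] at key
  have e : (2⁻¹ * rexp (u ^ 2 / 2)) * (-rexp (-u * u) / -u) = rexp (-u ^ 2 / 2) / (2 * u) := by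
    have : rexp (-u ^ 2 / 2) = rexp (u ^ 2 / 2) * rexp (-u * u) := by
      rw [← Real.exp_add]; congr 1; ring
    rw [this]; field_simp
  linarith

lemma aux_pow (n : ℕ) (hn : 2 ≤ n) (p : ℝ) (hp : 1 - 1 / (n : ℝ) ≤ p) : rexp (-2) ≤ p ^ n := by
  have hn' : (2 : ℝ) ≤ n := by exact_mod_cast hn
  have h1 : 1 / (n : ℝ) ≤ 1 / 2 := one_div_le_one_div_of_le (by norm_num) hn'
  have h0 : 0 < 1 - 1 / (n : ℝ) := by linarith
  have hl := Real.one_sub_inv_le_log_of_pos h0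
  have h2 : -(2 / (n : ℝ)) ≤ 1 - (1 - 1 / (n : ℝ))⁻¹ := by
    have : (n : ℝ) - 1 > 0 := by linarith
    have e : 1 - (1 - 1 / (n : ℝ))⁻¹ = -(1 / ((n : ℝ) - 1)) := by
      have : (n : ℝ) - 1 ≠ 0 := by linarith
      have h00 : 1 - 1 / (n : ℝ) ≠ 0 := h0.ne'
      have e1 : 1 - 1 / (n : ℝ) = (n - 1) / n := by field_simp
      rw [e1, inv_div]; field_simp; ring
    rw [e]; apply neg_le_neg
    rw [div_le_div_iff₀ (by linarith) (by linarith)]; linarith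
  have h3 : rexp (-(2 / (n : ℝ))) ≤ 1 - 1 / (n : ℝ) := by
    rw [← Real.le_log_iff_exp_le h0]; linarith
  calc rexp (-2) = rexp (-(2 / (n : ℝ))) ^ n := by
        rw [← Real.exp_nat_mul]; congr 1; field_simp
    _ ≤ p ^ n := pow_le_pow_left₀ (Real.exp_pos _).le (h3.trans hp) n

lemma aux_psi_int (δ ρ : ℝ) (n : ℕ) : Integrable (psiN δ ρ n) := by
  apply aux_pdf_int.mono'
  · apply AEStronglyMeasurable.mul aux_pdf_int.1
    apply Measurable.aestronglyMeasurable
    apply Measurable.pow_const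
    exact aux_cdf_mono.measurable.comp (by fun_prop)
  · refine Eventually.of_forall fun s => ?_
    unfold psiN
    rw [Real.norm_of_nonneg (mul_nonneg (aux_pdf_nonneg s) (pow_nonneg (aux_cdf_nonneg _) _))]
    exact mul_le_of_le_one_right (aux_pdf_nonneg s) (pow_le_one₀ (aux_cdf_nonneg _) (aux_cdf_le_one _))

/-- The cdf factor is bounded below at `-c_n` and to its left. -/
lemma aux_factor (δ ρ : ℝ) (hρ : ρ ∈ Set.Ioo (0 : ℝ) 1)
    (n : ℕ) (hn : 2 ≤ n) (hL : 1 ≤ Real.log n)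
    (s : ℝ) (hs : s ≤ -(cN δ ρ n)) :
    rexp (-2) ≤ stdNormalCDF ((tN δ ρ n - Real.sqrt ρ * s) / Real.sqrt (1 - ρ)) ^ n := by
  obtain ⟨h0, h1⟩ := hρ
  apply aux_pow n hn
  have hnpos : (0 : ℝ) < n := by positivity
  set L := Real.log n with hLdef
  have hLpos : 0 < L := by linarith
  have hLL : Real.log L ≤ L := by linarith [Real.log_le_sub_one_of_pos hLpos]
  set R := √(2 * L) with hR
  have hRpos : 0 < R := Real.sqrt_pos.2 (by linarith)
  have hR2 : R ^ 2 = 2 * L := Real.sq_sqrt (by linarith)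
  set u := R * (1 - (1 / 4) * Real.log L / L) with hu
  have hq : Real.log L / L ≤ 1 := (div_le_one hLpos).2 hLL
  have hu34 : R * (3 / 4) ≤ u := by
    apply mul_le_mul_of_nonneg_left _ hRpos.le
    rw [mul_div_assoc]; linarith
  have hupos : 0 < u := by linarith
  have hule : u ≤ (tN δ ρ n - Real.sqrt ρ * s) / Real.sqrt (1 - ρ) := by
    have hsr : 0 < √(1 - ρ) := Real.sqrt_pos.2 (by linarith)
    rw [le_div_iff₀ hsr]
    have e1 : √(2 * (1 - ρ) * L) = R * √(1 - ρ) := by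
      rw [hR, ← Real.sqrt_mul (by linarith)]; congr 1; ring
    have e2 : √ρ * √(2 * (1 - ρ) * L / ρ) = R * √(1 - ρ) := by
      rw [← e1, ← Real.sqrt_mul h0.le]; congr 1; field_simp
    have e3 : √ρ * cN δ ρ n = R * √(1 - ρ) * (1 - δ - (1 / 4) * Real.log L / L) := by
      unfold cN; rw [← mul_assoc, e2]
    have e4 : √ρ * s ≤ √ρ * (-(cN δ ρ n)) := mul_le_mul_of_nonneg_left hs (Real.sqrt_nonneg _)
    have e5 : tN δ ρ n = δ * (R * √(1 - ρ)) := by unfold tN; rw [← hLdef, e1]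
    rw [e5]
    have : u * √(1 - ρ) = δ * (R * √(1 - ρ)) + R * √(1 - ρ) * (1 - δ - (1 / 4) * Real.log L / L) := by
      rw [hu]; ring
    rw [this, ← e3]; linarith
  refine le_trans ?_ ((aux_tail u hupos).trans (aux_cdf_mono hule))
  have hu2 : L - Real.log L / 2 ≤ u ^ 2 / 2 := by
    have : u ^ 2 / 2 = L - Real.log L / 2 + (Real.log L) ^ 2 / (16 * L) := by
      rw [hu, mul_pow, hR2]; field_simp; ring
    rw [this]; have : 0 ≤ (Real.log L) ^ 2 / (16 * L) := by positivity
    linarith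
  have hexp : rexp (-u ^ 2 / 2) ≤ √L / n := by
    have : √L / n = rexp (-L + Real.log L / 2) := by
      rw [Real.exp_add, Real.exp_neg, hLdef, Real.exp_log hnpos, ← hLdef, Real.exp_half,
        Real.exp_log hLpos]; ring
    rw [this]; apply Real.exp_le_exp.2; linarith
  have hR1 : √L ≤ R := Real.sqrt_le_sqrt (by linarith)
  have : rexp (-u ^ 2 / 2) / (2 * u) ≤ 1 / n := by
    rw [div_le_iff₀ (by linarith)]
    refine hexp.trans ?_
    rw [one_div_mul_eq_div]
    gcongr
    linarith
  linarith

lemma aux_density (δ ρ : ℝ) (hρ : ρ ∈ Set.Ioo (0 : ℝ) 1) (hδ : δ ∈ Set.Ioo (0 : ℝ) 1)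
    (L A : ℝ) (hA : A = √(2 * (1 - ρ) / ρ)) (hL : 1 ≤ L)
    (hLL : (Real.log L) ^ 2 ≤ L) (hLδ : Real.log L / L ≤ 1 - δ)
    (s c : ℝ) (hc : c = √(2 * (1 - ρ) * L / ρ) * (1 - δ - (1 / 4) * Real.log L / L))
    (h1 : s ≤ -c) (h2 : -c - 1 / √L ≤ s) :
    s ^ 2 / 2 ≤ (1 - ρ) * (1 - δ) ^ 2 / ρ * L - (1 - ρ) * (1 - δ) / ρ / 2 * Real.log L
      + (A + 1 / 2 + A ^ 2 / 32) := by
  obtain ⟨h0, h1'⟩ := hρ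
  obtain ⟨d0, d1⟩ := hδ
  have hLpos : 0 < L := by linarith
  have hl0 : 0 ≤ Real.log L := Real.log_nonneg hL
  have hA2 : A ^ 2 = 2 * (1 - ρ) / ρ := by
    rw [hA]; exact Real.sq_sqrt (by apply div_nonneg <;> linarith)
  have hA0 : 0 ≤ A := hA ▸ Real.sqrt_nonneg _
  have hS : 1 ≤ √L := Real.one_le_sqrt.2 hL
  have hS2 : √L ^ 2 = L := Real.sq_sqrt hLpos.le
  have e1 : √(2 * (1 - ρ) * L / ρ) = A * √L := by
    rw [hA, ← Real.sqrt_mul (by apply div_nonneg <;> linarith)]; congr 1; ring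
  rw [e1, mul_div_assoc] at hc
  have hq0 : 0 ≤ Real.log L / L := by positivity
  set q := Real.log L / L with hq
  have hqL : q * L = Real.log L := by rw [hq]; field_simp
  have hc0 : 0 ≤ c := by
    rw [hc]; apply mul_nonneg (by positivity); linarith
  have hcle : c ≤ A * √L := by
    rw [hc]; apply mul_le_of_le_one_right (by positivity); linarith
  set w := 1 / √L with hw
  have hw0 : 0 ≤ w := by positivity
  have hw1 : w ≤ 1 := (div_le_one (by linarith)).2 hS
  have hcw : c * w ≤ A := by
    calc c * w ≤ A * √L * w := by gcongr
      _ = A := by rw [hw]; field_simp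
  have hs2 : s ^ 2 ≤ (c + w) ^ 2 := by
    apply sq_le_sq' <;> linarith
  have hc2 : c ^ 2 / 2 = (1 - ρ) * (1 - δ) ^ 2 / ρ * L - (1 - ρ) * (1 - δ) / ρ / 2 * Real.log L
      + A ^ 2 / 32 * (q * Real.log L) := by
    rw [hc, mul_pow, mul_pow, hS2, hA2, ← hqL]; ring
  have hqq : q * Real.log L ≤ 1 := by
    rw [hq, div_mul_eq_mul_div, div_le_one hLpos]; linarith
  have : A ^ 2 / 32 * (q * Real.log L) ≤ A ^ 2 / 32 * 1 := by gcongr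
  nlinarith

theorem psi_integral_far_left_tail_lower_bound (δ₀ ρ₀ : ℝ)
    (hδ : δ₀ ∈ Set.Ioo (0 : ℝ) 1) (hρ : ρ₀ ∈ Set.Ioo (0 : ℝ) 1) :
    ∃ c : ℝ, 0 < c ∧
      ∀ᶠ n : ℕ in atTop,
        c * (n : ℝ) ^ (-((1 - ρ₀) * (1 - δ₀) ^ 2 / ρ₀))
              * Real.log n ^ (((1 - ρ₀) * (1 - δ₀) / ρ₀ - 1) / 2)
          ≤ ∫ s in Set.Iic (-(cN δ₀ ρ₀ n)), psiN δ₀ ρ₀ n s := by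
  set A := √(2 * (1 - ρ₀) / ρ₀) with hA
  set B := A + 1 / 2 + A ^ 2 / 32 with hB
  refine ⟨(√(2 * π))⁻¹ * rexp (-B) * rexp (-2), by positivity, ?_⟩
  have hlog : Tendsto (fun n : ℕ => Real.log n) atTop atTop :=
    Real.tendsto_log_atTop.comp tendsto_natCast_atTop_atTop
  have E1 : ∀ᶠ L : ℝ in atTop, (Real.log L) ^ 2 ≤ L := by
    have := (isLittleO_pow_log_id_atTop (n := 2)).bound one_pos
    filter_upwards [this, eventually_ge_atTop 0] with L h h0
    simpa [abs_of_nonneg h0] using h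
  have E2 : ∀ᶠ L : ℝ in atTop, Real.log L / L ≤ 1 - δ₀ := by
    have := (Real.isLittleO_log_id_atTop).bound (c := 1 - δ₀) (by linarith [hδ.2])
    filter_upwards [this, eventually_gt_atTop 0] with L h h0
    rw [div_le_iff₀ h0]
    simp only [id, Real.norm_eq_abs, abs_of_pos h0] at h
    exact (le_abs_self _).trans h
  filter_upwards [eventually_ge_atTop 2, hlog.eventually (eventually_ge_atTop 1),
    hlog.eventually E1, hlog.eventually E2] with n hn hL hLL hLδ
  have hnpos : (0 : ℝ) < n := by positivity
  have hLpos : 0 < Real.log n := by linarith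
  set C := cN δ₀ ρ₀ n with hC
  set w := 1 / √(Real.log n) with hw
  have hw0 : 0 ≤ w := by positivity
  have hpsi0 : ∀ s, 0 ≤ psiN δ₀ ρ₀ n s := fun s =>
    mul_nonneg (aux_pdf_nonneg s) (pow_nonneg (aux_cdf_nonneg _) _)
  have hsub : ∫ s in Set.Icc (-C - w) (-C), psiN δ₀ ρ₀ n s ≤ ∫ s in Set.Iic (-C), psiN δ₀ ρ₀ n s :=
    setIntegral_mono_set (aux_psi_int _ _ _).integrableOn (Eventually.of_forall hpsi0)
      (Set.Icc_subset_Iic_self).eventuallyLE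
  refine le_trans ?_ hsub
  set a := (1 - ρ₀) * (1 - δ₀) ^ 2 / ρ₀ with ha
  set b := (1 - ρ₀) * (1 - δ₀) / ρ₀ with hb
  set M := (√(2 * π))⁻¹ * rexp (-(a * Real.log n - b / 2 * Real.log (Real.log n) + B)) * rexp (-2)
    with hM
  have hlow : ∫ s in Set.Icc (-C - w) (-C), M ≤ ∫ s in Set.Icc (-C - w) (-C), psiN δ₀ ρ₀ n s := by
    apply setIntegral_mono_on _ (aux_psi_int _ _ _).integrableOn measurableSet_Icc
    · intro s hs
      unfold psiN
      rw [hM]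
      apply mul_le_mul _ (aux_factor δ₀ ρ₀ hρ n hn hL s hs.2) (by positivity) (aux_pdf_nonneg s)
      unfold stdNormalPDF
      gcongr
      have := aux_density δ₀ ρ₀ hρ hδ (Real.log n) A hA hL hLL hLδ s C rfl hs.2 hs.1
      linarith
    · exact integrableOn_const (by simp)
  refine le_trans (le_of_eq ?_) hlow
  rw [setIntegral_const, Real.volume_real_Icc_of_le (by linarith), smul_eq_mul, hM]
  have e1 : (n : ℝ) ^ (-a) = rexp (-(a * Real.log n)) := by
    rw [Real.rpow_def_of_pos hnpos]; congr 1; ring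
  have e2 : Real.log n ^ ((b - 1) / 2) = rexp (b / 2 * Real.log (Real.log n)) * w := by
    rw [hw, Real.sqrt_eq_rpow, one_div, ← Real.rpow_neg hLpos.le, Real.rpow_def_of_pos hLpos,
      Real.rpow_def_of_pos hLpos, ← Real.exp_add]
    congr 1; ring
  have e3 : rexp (-(a * Real.log n - b / 2 * Real.log (Real.log n) + B)) =
      rexp (-(a * Real.log n)) * rexp (b / 2 * Real.log (Real.log n)) * rexp (-B) := by
    rw [← Real.exp_add, ← Real.exp_add]; congr 1; ring
  rw [e1, e2, e3]; ring
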